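/- The ℏ^δ-average preserves the symbol class: if K_ℏ ∈ Ψ_δ^m and A_ℏ is defined via Fourier coefficients by Ã_ℏ(k,ξ) = χ(Ω_k(ξ)/(|k|ℏ^δ)) K̃_ℏ(k,ξ) for k ≠ 0 and Ã_ℏ(0,ξ) = K̃_ℏ(0,ξ), where χ ∈ C_0^∞(ℝ), then A_ℏ ∈ Ψ_δ^m. -/

import Mathlib

open scoped Real BigOperators
open MeasureTheory

noncomputable section

/-- Phase space `T^d × ℝ^d`, with the torus modelled by periodic functions on `ℝ^d`. -/
abbrev Vec (d : ℕ) := Fin d → ℝ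
abbrev Phase (d : ℕ) := Vec d × Vec d

/-- Directional derivative. -/
noncomputable def dirD {d : ℕ} (v : Phase d) (f : Phase d → ℂ) : Phase d → ℂ :=
  fun p => fderiv ℝ f p v

/-- Iterated partial derivatives `∂_x^α ∂_ξ^β`, with the multi-indices given as lists of
coordinate directions (`lx` in `x`, `lξ` in `ξ`). -/
noncomputable def mDeriv {d : ℕ} (lx lξ : List (Fin d)) (f : Phase d → ℂ) : Phase d → ℂ :=
  ((lx.map (fun i => ((Pi.single i 1, 0) : Phase d))
    ++ lξ.map (fun i => ((0, Pi.single i 1) : Phase d))).foldr dirD) f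

/-- The symbol class `Ψ_δ^m`: `|∂_x^α ∂_ξ^β P_ℏ(x,ξ)| ≤ C_{α,β} ℏ^{m-δ|β|}`. -/
def IsSymbol (d : ℕ) (δ m : ℝ) (P : ℝ → Phase d → ℂ) : Prop :=
  (∀ h ∈ Set.Ioc (0:ℝ) 1, ContDiff ℝ (⊤ : ℕ∞) (P h)) ∧
  ∀ lx lξ : List (Fin d), ∃ C > 0, ∀ h ∈ Set.Ioc (0:ℝ) 1, ∀ p : Phase d,
    ‖mDeriv lx lξ (P h) p‖ ≤ C * h ^ (m - δ * (lξ.length : ℝ))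

/-- `2π`-periodicity in the `x` variable. -/
def PeriodicX {d : ℕ} (f : Phase d → ℂ) : Prop :=
  ∀ (x ξ : Vec d) (k : Fin d → ℤ), f (x + fun i => 2 * Real.pi * (k i), ξ) = f (x, ξ)

/-- Fourier coefficient in the torus variable. -/
noncomputable def fCoeff {d : ℕ} (g : Vec d → ℂ) (k : Fin d → ℤ) : ℂ :=
  ((2 * Real.pi : ℂ) ^ d)⁻¹ *
    ∫ x in Set.Icc (0 : Vec d) (fun _ => 2 * Real.pi),
      Complex.exp (-(Complex.I * ((∑ i, (k i : ℝ) * x i : ℝ) : ℂ))) * g x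

/-- Directional derivative in `ξ` only. -/
noncomputable def dirDξ {d : ℕ} (i : Fin d) (g : Vec d → ℂ) : Vec d → ℂ :=
  fun ξ => fderiv ℝ g ξ (Pi.single i 1)

noncomputable def mDerivξ {d : ℕ} (l : List (Fin d)) (g : Vec d → ℂ) : Vec d → ℂ :=
  l.foldr dirDξ g

/-- Euclidean norm of an integer vector. -/
noncomputable def znorm {d : ℕ} (k : Fin d → ℤ) : ℝ := Real.sqrt (∑ i, ((k i : ℝ)) ^ 2)

/-- Real vector attached to `k ∈ ℤ^d`. -/
def zr {d : ℕ} (k : Fin d → ℤ) : Vec d := fun i => (k i : ℝ)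
open scoped Classical

/-- `Ω_X(ξ) = dH_ξ(X)`. -/
noncomputable def Om {d : ℕ} (H : Vec d → ℝ) (ξ X : Vec d) : ℝ := fderiv ℝ H ξ X

/-- All derivatives of `H` are (uniformly) bounded. -/
def BddDerivs {d : ℕ} (H : Vec d → ℝ) : Prop :=
  ∀ n : ℕ, ∃ C, ∀ ξ : Vec d, ‖iteratedFDeriv ℝ n H ξ‖ ≤ C

/-- Cut-off data: `χ ∈ C_0^∞(ℝ)` with values in `[0,1]`, symmetric, vanishing for
`|t| ≥ 1`, and with `χ − 1` flat at `0`. -/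
structure CutOff (χ : ℝ → ℝ) : Prop where
  smooth : ContDiff ℝ (⊤ : ℕ∞) χ
  mem01 : ∀ t, χ t ∈ Set.Icc (0:ℝ) 1
  symm : ∀ t, χ (-t) = χ t
  supp : ∀ t : ℝ, 1 ≤ |t| → χ t = 0
  flat : ∀ n : ℕ, iteratedDeriv n (fun t => χ t - 1) 0 = 0

/-- `A` is (a realization of) the `ℏ^δ`-average of `K`: a smooth periodic family whose
Fourier coefficients are `Ã_ℏ(k,ξ) = χ(Ω_k(ξ)/(|k|ℏ^δ)) K̃_ℏ(k,ξ)` for `k ≠ 0` and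
`Ã_ℏ(0,ξ) = K̃_ℏ(0,ξ)`. -/
def IsHAverage {d : ℕ} (H : Vec d → ℝ) (χ : ℝ → ℝ) (δ : ℝ)
    (K A : ℝ → Phase d → ℂ) : Prop :=
  (∀ h ∈ Set.Ioc (0:ℝ) 1, ContDiff ℝ (⊤ : ℕ∞) (A h)) ∧
  (∀ h ∈ Set.Ioc (0:ℝ) 1, PeriodicX (A h)) ∧
  ∀ h ∈ Set.Ioc (0:ℝ) 1, ∀ (k : Fin d → ℤ) (ξ : Vec d),
    fCoeff (fun x => A h (x, ξ)) k =
      if k = 0 then fCoeff (fun x => K h (x, ξ)) 0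
      else (χ (Om H ξ (zr k) / (znorm k * h ^ δ)) : ℂ) * fCoeff (fun x => K h (x, ξ)) k

section Inversion

open scoped Pointwise

/-- the covering map `ℝ^d → T^d`. -/
def covQ (d : ℕ) (y : Vec d) : UnitAddTorus (Fin d) := fun i => ((y i : ℝ) : UnitAddCircle)

lemma covQ_quot (d : ℕ) : Topology.IsQuotientMap (covQ d) := by
  have : IsOpenQuotientMap (Pi.map (fun (_ : Fin d) (y : ℝ) => (y : UnitAddCircle))) :=
    IsOpenQuotientMap.piMap (fun _ => QuotientAddGroup.isOpenQuotientMap_mk)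
  exact this.isQuotientMap

/-- descends a periodic function to the torus -/
def descend {d : ℕ} (g : Vec d → ℂ) (t : UnitAddTorus (Fin d)) : ℂ :=
  g (fun i => 2 * Real.pi * (Quotient.out (t i) : ℝ))

lemma descend_covQ {d : ℕ} (g : Vec d → ℂ)
    (hper : ∀ (x : Vec d) (k : Fin d → ℤ), g (x + fun i => 2 * Real.pi * (k i)) = g x)
    (y : Vec d) : descend g (covQ d y) = g ((2 * Real.pi) • y) := by
  have h : ∀ i, ∃ n : ℤ, (Quotient.out (covQ d y i) : ℝ) = y i + n := by
    intro i
    have h1 : ((Quotient.out (covQ d y i) : ℝ) : UnitAddCircle) = (y i : UnitAddCircle) :=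
      Quotient.out_eq' _
    have h2 := (QuotientAddGroup.eq_iff_sub_mem.1 h1)
    obtain ⟨n, hn⟩ := AddSubgroup.mem_zmultiples_iff.1 h2
    refine ⟨n, ?_⟩
    simp at hn
    linarith
  choose n hn using h
  unfold descend
  rw [← hper ((2 * Real.pi) • y) n]
  congr 1
  funext i
  simp [hn]
  ring

lemma coeff_descend {d : ℕ} (g : Vec d → ℂ)
    (hper : ∀ (x : Vec d) (k : Fin d → ℤ), g (x + fun i => 2 * Real.pi * (k i)) = g x)
    (k : Fin d → ℤ) : UnitAddTorus.mFourierCoeff (descend g) k = fCoeff g k := by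
  rw [UnitAddTorus.mFourierCoeff_eq_integral _ _ 0]
  have hpi : (0:ℝ) < 2 * Real.pi := by positivity
  have hs : {x : Fin d → ℝ | ∀ i, x i ∈ Set.Ioc ((0 : Fin d → ℝ) i) ((0 : Fin d → ℝ) i + 1)} =ᵐ[volume]
      Set.Icc (0 : Vec d) 1 := by
    have := (Measure.univ_pi_Ioc_ae_eq_Icc (μ := fun _ : Fin d => (volume : Measure ℝ)) (f := 0) (g := 1))
    have e0 : {x : Fin d → ℝ | ∀ i, x i ∈ Set.Ioc ((0 : Fin d → ℝ) i) ((0 : Fin d → ℝ) i + 1)} =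
        Set.univ.pi fun i => Set.Ioc ((0 : Fin d → ℝ) i) ((1 : Fin d → ℝ) i) := by
      ext x
      simp [Set.mem_pi]
    rw [e0]
    exact this
  rw [setIntegral_congr_set hs]
  have e : ∀ x : Vec d, UnitAddTorus.mFourier (-k) (fun i => (x i : UnitAddCircle)) •
      descend g (fun i => (x i : UnitAddCircle)) =
      (fun z : Vec d => Complex.exp (-(Complex.I * ((∑ i, (k i : ℝ) * z i : ℝ) : ℂ))) * g z)
        ((2 * Real.pi) • x) := by
    intro x
    have := descend_covQ g hper x
    unfold covQ at this
    rw [this]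
    simp only [smul_eq_mul]
    congr 1
    simp only [UnitAddTorus.mFourier, ContinuousMap.coe_mk, fourier_coe_apply]
    rw [← Complex.exp_sum]
    congr 1
    push_cast
    rw [Finset.mul_sum, ← Finset.sum_neg_distrib]
    refine Finset.sum_congr rfl fun i _ => ?_
    simp
    ring
  rw [integral_congr_ae (Filter.Eventually.of_forall e)]
  rw [Measure.setIntegral_comp_smul volume (fun z : Vec d =>
    Complex.exp (-(Complex.I * ((∑ i, (k i : ℝ) * z i : ℝ) : ℂ))) * g z) _ hpi.ne']
  have e2 : (2 * Real.pi) • Set.Icc (0 : Vec d) 1 = Set.Icc (0 : Vec d) (fun _ => 2 * Real.pi) := by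
    ext x
    rw [Set.mem_smul_set_iff_inv_smul_mem₀ hpi.ne']
    simp only [Set.mem_Icc, Pi.le_def, Pi.zero_apply, Pi.one_apply, Pi.smul_apply, smul_eq_mul]
    refine and_congr (forall_congr' fun i => ?_) (forall_congr' fun i => ?_)
    · exact mul_nonneg_iff_of_pos_left (by positivity)
    · rw [inv_mul_le_iff₀ hpi, mul_one]
  rw [e2]
  unfold fCoeff
  rw [abs_of_pos (by positivity)]
  simp

lemma norm_le_of_coeff {d : ℕ} (g : Vec d → ℂ) (hg : Continuous g)
    (hper : ∀ (x : Vec d) (k : Fin d → ℤ), g (x + fun i => 2 * Real.pi * (k i)) = g x)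
    (B : (Fin d → ℤ) → ℝ) (hB : Summable B) (hb : ∀ k, ‖fCoeff g k‖ ≤ B k) (x : Vec d) :
    ‖g x‖ ≤ ∑' k, B k := by
  have hc : Continuous (descend g) := by
    rw [(covQ_quot d).continuous_iff]
    have : descend g ∘ covQ d = fun y => g ((2 * Real.pi) • y) := by
      funext y; exact descend_covQ g hper y
    rw [this]
    fun_prop
  let F : C(UnitAddTorus (Fin d), ℂ) := ⟨descend g, hc⟩
  have hF : ∀ k, UnitAddTorus.mFourierCoeff F k = fCoeff g k := coeff_descend g hper
  have hsum : Summable (UnitAddTorus.mFourierCoeff F) :=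
    Summable.of_norm_bounded hB (fun k => by rw [hF]; exact hb k)
  have h := UnitAddTorus.hasSum_mFourier_series_apply_of_summable hsum
    (covQ d ((2 * Real.pi)⁻¹ • x))
  have hval : F (covQ d ((2 * Real.pi)⁻¹ • x)) = g x := by
    change descend g _ = _
    rw [descend_covQ g hper, smul_inv_smul₀ (by positivity)]
  rw [hval] at h
  rw [← h.tsum_eq]
  refine tsum_of_norm_bounded hB.hasSum fun k => ?_
  rw [norm_smul, hF]
  have h1 : ‖UnitAddTorus.mFourier k (covQ d ((2 * Real.pi)⁻¹ • x))‖ ≤ 1 := by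
    refine (ContinuousMap.norm_coe_le_norm _ _).trans UnitAddTorus.mFourier_norm.le
  calc _ ≤ ‖fCoeff g k‖ * 1 := by gcongr
    _ ≤ _ := by rw [mul_one]; exact hb k

end Inversion

lemma norm_zr {d : ℕ} (k : Fin d → ℤ) : ‖zr k‖ = ‖k‖ := by
  simp only [zr, Pi.norm_def]
  congr 2

lemma one_le_norm_int {d : ℕ} {k : Fin d → ℤ} (hk : k ≠ 0) : 1 ≤ ‖k‖ := by
  obtain ⟨i, hi⟩ := Function.ne_iff.1 hk
  refine le_trans ?_ (norm_le_pi_norm k i)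
  rw [Int.norm_eq_abs]
  exact_mod_cast Int.one_le_abs hi

lemma summable_weight (d : ℕ) : Summable (fun k : Fin d → ℤ => ((max 1 ‖k‖) ^ (d + 1))⁻¹) := by
  let b := Pi.basisFun ℝ (Fin d)
  let L : Submodule ℤ (Vec d) := Submodule.span ℤ (Set.range b)
  have hr : Module.finrank ℤ L = d := by
    have := ZLattice.rank ℝ L
    simpa using this
  have hs := ZLattice.summable_norm_pow_inv L (d + 1) (by rw [hr]; omega)
  have hmem : ∀ k : Fin d → ℤ, zr k ∈ L := by
    intro k
    have : zr k = ∑ i, k i • b i := by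
      funext j
      simp [zr, b, Finset.sum_apply, Pi.single_apply]
    rw [this]
    exact Submodule.sum_mem _ fun i _ =>
      Submodule.smul_mem _ _ (Submodule.subset_span ⟨i, rfl⟩)
  have hinj : Function.Injective (fun k : Fin d → ℤ => (⟨zr k, hmem k⟩ : L)) := by
    intro k k' h
    have h1 : zr k = zr k' := congrArg Subtype.val h
    funext i
    have h3 : ((k i : ℤ) : ℝ) = (k' i : ℝ) := congrFun h1 i
    exact_mod_cast h3
  have h2 := hs.comp_injective hinj
  refine Summable.of_norm_bounded_eventually h2 ?_
  have : ∀ᶠ k : Fin d → ℤ in Filter.cofinite, k ≠ 0 := by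
    simp
  filter_upwards [this] with k hk
  have h3 : ‖(⟨zr k, hmem k⟩ : L)‖ = ‖k‖ := norm_zr k
  simp only [Function.comp, h3]
  rw [max_eq_right (one_le_norm_int hk)]
  simp

section Param

/-- the box of integration -/
abbrev bx (d : ℕ) : Set (Vec d) := Set.Icc (0 : Vec d) (fun _ => 2 * Real.pi)

lemma bx_compact (d : ℕ) : IsCompact (bx d) := isCompact_Icc

lemma param_hasFDerivAt {d : ℕ} {E : Type} [NormedAddCommGroup E] [NormedSpace ℝ E]
    (F : Phase d → E) (hF : ContDiff ℝ 1 F) (ξ : Vec d) :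
    HasFDerivAt (fun ξ : Vec d => ∫ x in bx d, F (x, ξ))
      (∫ x in bx d, (fderiv ℝ F (x, ξ)).comp (ContinuousLinearMap.inr ℝ (Vec d) (Vec d))) ξ := by
  have hc : Continuous F := hF.continuous
  have hc' : Continuous (fun p : Phase d =>
      (fderiv ℝ F p).comp (ContinuousLinearMap.inr ℝ (Vec d) (Vec d))) := by
    have := hF.continuous_fderiv one_ne_zero
    fun_prop
  obtain ⟨C, hC⟩ := ((bx_compact d).prod (isCompact_closedBall ξ 1)).exists_bound_of_continuousOn
    hc'.continuousOn
  refine hasFDerivAt_integral_of_dominated_of_fderiv_le (s := Metric.closedBall ξ 1)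
    (F := fun ξ x => F (x, ξ)) (bound := fun _ => C)
    (F' := fun ξ x => (fderiv ℝ F (x, ξ)).comp (ContinuousLinearMap.inr ℝ (Vec d) (Vec d)))
    (Metric.closedBall_mem_nhds ξ one_pos) ?_ ?_ ?_ ?_ ?_ ?_
  · refine Filter.Eventually.of_forall fun η => ?_
    have : Continuous (fun x : Vec d => F (x, η)) := by fun_prop
    exact this.aestronglyMeasurable
  · have : Continuous (fun x : Vec d => F (x, ξ)) := by fun_prop
    exact this.continuousOn.integrableOn_compact (bx_compact d)
  · have : Continuous (fun x : Vec d =>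
      (fderiv ℝ F (x, ξ)).comp (ContinuousLinearMap.inr ℝ (Vec d) (Vec d))) :=
        hc'.comp (by fun_prop : Continuous fun x : Vec d => ((x, ξ) : Phase d))
    exact this.aestronglyMeasurable
  · refine (ae_restrict_iff' measurableSet_Icc).2 (Filter.Eventually.of_forall fun x hx η hη => ?_)
    exact hC (x, η) ⟨hx, hη⟩
  · exact (continuous_const (y := C)).continuousOn.integrableOn_compact (bx_compact d)
  · refine Filter.Eventually.of_forall fun x η _ => ?_
    have h1 : HasFDerivAt F (fderiv ℝ F (x, η)) (x, η) :=
      (hF.differentiable one_ne_zero).differentiableAt.hasFDerivAt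
    exact h1.comp η (hasFDerivAt_prodMk_right x η)

lemma param_contDiff {d : ℕ} (n : ℕ) : ∀ {E : Type} [NormedAddCommGroup E] [NormedSpace ℝ E]
    (F : Phase d → E) (_ : ContDiff ℝ (⊤ : ℕ∞) F),
    ContDiff ℝ n (fun ξ : Vec d => ∫ x in bx d, F (x, ξ)) := by
  induction n with
  | zero =>
    intro E _ _ F hF
    refine contDiff_zero.2 ?_
    exact continuous_iff_continuousAt.2 fun ξ =>
      (param_hasFDerivAt F (hF.of_le (by exact_mod_cast le_top)) ξ).continuousAt
  | succ n ih =>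
    intro E _ _ F hF
    have hF1 : ContDiff ℝ 1 F := hF.of_le (by exact_mod_cast le_top)
    push_cast
    rw [contDiff_succ_iff_hasFDerivAt]
    refine ⟨_, ?_, fun ξ => param_hasFDerivAt F hF1 ξ⟩
    refine ih (fun p => (fderiv ℝ F p).comp (ContinuousLinearMap.inr ℝ (Vec d) (Vec d))) ?_
    have := hF.fderiv_right (m := (⊤ : ℕ∞)) (by simp)
    fun_prop

/-- the character -/
def ek {d : ℕ} (k : Fin d → ℤ) (x : Vec d) : ℂ :=
  Complex.exp (-(Complex.I * ((∑ i, (k i : ℝ) * x i : ℝ) : ℂ)))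

lemma ek_contDiff {d : ℕ} (k : Fin d → ℤ) : ContDiff ℝ (⊤ : ℕ∞) (ek k) := by
  unfold ek
  refine ContDiff.cexp (ContDiff.neg (contDiff_const.mul ?_))
  have h : ContDiff ℝ (⊤ : ℕ∞) (fun x : Vec d => ∑ i, (k i : ℝ) * x i) :=
    ContDiff.sum fun i _ => contDiff_const.mul (contDiff_apply ℝ ℝ i)
  exact Complex.ofRealCLM.contDiff.comp h

lemma ek_norm {d : ℕ} (k : Fin d → ℤ) (x : Vec d) : ‖ek k x‖ = 1 := by
  unfold ek
  rw [Complex.norm_exp]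
  simp only [Complex.neg_re, Complex.I_mul_re, Complex.ofReal_im, neg_zero, Real.exp_zero]

lemma ek_add_period {d : ℕ} (k : Fin d → ℤ) (x : Vec d) (n : Fin d → ℤ) :
    ek k (x + fun i => 2 * Real.pi * (n i)) = ek k x := by
  unfold ek
  rw [Complex.exp_eq_exp_iff_exists_int]
  refine ⟨-(∑ i, k i * n i), ?_⟩
  simp only [Pi.add_apply, mul_add, Finset.sum_add_distrib]
  push_cast
  have : ∑ i, (k i : ℂ) * (2 * (Real.pi : ℂ) * (n i : ℂ))
      = 2 * Real.pi * ∑ i, (k i : ℂ) * (n i : ℂ) := by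
    rw [Finset.mul_sum]
    exact Finset.sum_congr rfl fun i _ => by ring
  rw [this]
  ring

lemma ek_fderiv {d : ℕ} (k : Fin d → ℤ) (x : Vec d) (i : Fin d) :
    fderiv ℝ (ek k) x (Pi.single i 1) = -(Complex.I * (k i : ℂ)) * ek k x := by
  let L : Vec d →L[ℝ] ℝ := ∑ j, (k j : ℝ) • ContinuousLinearMap.proj j
  have hL : ∀ x : Vec d, (∑ j, (k j : ℝ) * x j : ℝ) = L x := by
    intro x
    simp [L]
  have hLi : L (Pi.single i 1) = k i := by
    rw [← hL]
    simp [Pi.single_apply]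
  have h : HasFDerivAt (ek k)
      (ek k x • (-(Complex.I • (Complex.ofRealCLM.comp L)) : Vec d →L[ℝ] ℂ)) x := by
    have h0 : HasFDerivAt (fun y : Vec d => ((L y : ℝ) : ℂ)) (Complex.ofRealCLM.comp L) x :=
      (Complex.ofRealCLM.comp L).hasFDerivAt
    have h1 := ((h0.const_mul Complex.I).neg).cexp
    unfold ek
    simp only [hL]
    exact h1
  rw [h.fderiv]
  simp [hLi]
  ring

/-- Fourier coefficients as a function of `ξ`. -/
def cf {d : ℕ} (f : Phase d → ℂ) (k : Fin d → ℤ) : Vec d → ℂ :=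
  fun ξ => fCoeff (fun x => f (x, ξ)) k

lemma cf_eq {d : ℕ} (f : Phase d → ℂ) (k : Fin d → ℤ) (ξ : Vec d) :
    cf f k ξ = ((2 * Real.pi : ℂ) ^ d)⁻¹ * ∫ x in bx d, (fun p : Phase d => ek k p.1 * f p) (x, ξ) :=
  rfl

lemma ekf_contDiff {d : ℕ} {f : Phase d → ℂ} (hf : ContDiff ℝ (⊤ : ℕ∞) f) (k : Fin d → ℤ) :
    ContDiff ℝ (⊤ : ℕ∞) (fun p : Phase d => ek k p.1 * f p) :=
  ((ek_contDiff k).comp contDiff_fst).mul hf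

lemma cf_contDiff {d : ℕ} {f : Phase d → ℂ} (hf : ContDiff ℝ (⊤ : ℕ∞) f) (k : Fin d → ℤ) :
    ContDiff ℝ (⊤ : ℕ∞) (cf f k) := by
  rw [contDiff_infty]
  intro n
  have := param_contDiff n _ (ekf_contDiff hf k)
  exact contDiff_const.mul this

lemma cf_dirξ {d : ℕ} {f : Phase d → ℂ} (hf : ContDiff ℝ (⊤ : ℕ∞) f) (k : Fin d → ℤ) (i : Fin d) :
    dirDξ i (cf f k) = cf (dirD (0, Pi.single i 1) f) k := by
  funext ξ
  have hG := ekf_contDiff hf k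
  have hG1 : ContDiff ℝ 1 (fun p : Phase d => ek k p.1 * f p) := hG.of_le (by exact_mod_cast le_top)
  have h := (param_hasFDerivAt _ hG1 ξ).const_mul (((2 * Real.pi : ℂ) ^ d)⁻¹)
  unfold dirDξ
  have e : cf f k = fun ξ => ((2 * Real.pi : ℂ) ^ d)⁻¹ *
    ∫ x in bx d, (fun p : Phase d => ek k p.1 * f p) (x, ξ) := rfl
  rw [e, h.fderiv, cf_eq]
  simp only [_root_.smul_apply, smul_eq_mul]
  congr 1
  rw [ContinuousLinearMap.integral_apply]
  · refine integral_congr_ae (Filter.Eventually.of_forall fun x => ?_)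
    simp only [ContinuousLinearMap.comp_apply, ContinuousLinearMap.inr_apply]
    have h1 : HasFDerivAt (fun p : Phase d => ek k p.1)
        ((fderiv ℝ (ek k) x).comp (ContinuousLinearMap.fst ℝ (Vec d) (Vec d))) (x, ξ) :=
      HasFDerivAt.comp (x, ξ) (g := ek k)
        (((ek_contDiff k).differentiable (by simp)).differentiableAt.hasFDerivAt) hasFDerivAt_fst
    have h2 : HasFDerivAt f (fderiv ℝ f (x, ξ)) (x, ξ) :=
      (hf.differentiable (by simp)).differentiableAt.hasFDerivAt
    have h5 : fderiv ℝ (fun p : Phase d => ek k p.1 * f p) (x, ξ) = _ := (h1.mul h2).fderiv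
    rw [h5]
    simp [dirD]
  · have hc' : Continuous (fun p : Phase d =>
      (fderiv ℝ (fun p : Phase d => ek k p.1 * f p) p).comp
        (ContinuousLinearMap.inr ℝ (Vec d) (Vec d))) := by
      have := hG1.continuous_fderiv one_ne_zero
      fun_prop
    have : Continuous (fun x : Vec d =>
      (fderiv ℝ (fun p : Phase d => ek k p.1 * f p) (x, ξ)).comp
        (ContinuousLinearMap.inr ℝ (Vec d) (Vec d))) :=
        hc'.comp (by fun_prop : Continuous fun x : Vec d => ((x, ξ) : Phase d))
    exact this.continuousOn.integrableOn_compact (bx_compact d)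

lemma integral_deriv_periodic {d : ℕ} (g : Vec d → ℂ) (hg : ContDiff ℝ 1 g)
    (hper : ∀ (x : Vec d) (k : Fin d → ℤ), g (x + fun i => 2 * Real.pi * (k i)) = g x)
    (i : Fin d) : ∫ x in bx d, fderiv ℝ g x (Pi.single i 1) = 0 := by
  cases d with
  | zero => exact i.elim0
  | succ n =>
  have hc := hg.continuous
  have hc' := hg.continuous_fderiv one_ne_zero
  have key := integral_divergence_of_hasFDerivAt_off_countable' (0 : Vec (n+1))
    (fun _ => 2 * Real.pi) (fun _ => by simp; positivity)
    (fun j => if j = i then g else 0)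
    (fun j x => if j = i then fderiv ℝ g x else 0) ∅ Set.countable_empty
    (fun j => by
      by_cases h : j = i
      · simp only [h, if_true]; exact hc.continuousOn
      · simp only [h, if_false]; exact continuousOn_const)
    (fun x _ j => by
      by_cases h : j = i
      · simp only [h, if_true]
        exact (hg.differentiable one_ne_zero).differentiableAt.hasFDerivAt
      · simp only [h, if_false]; exact hasFDerivAt_const 0 x)
    (by
      refine Continuous.integrableOn_Icc ?_
      refine continuous_finsetSum _ fun j _ => ?_
      by_cases h : j = i
      · simp only [h, if_true]; fun_prop
      · simp only [h, if_false]; exact continuous_const)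
  have hl : ∀ x : Vec (n+1), (∑ j, (if j = i then fderiv ℝ g x else 0) (Pi.single j (1:ℝ)))
      = fderiv ℝ g x (Pi.single i 1) := by
    intro x
    rw [Finset.sum_eq_single i]
    · simp
    · intro j _ h; simp [h]
    · simp
  simp only [hl] at key
  rw [key]
  refine Finset.sum_eq_zero fun j _ => ?_
  by_cases h : j = i
  · subst h
    simp only [if_true]
    rw [sub_eq_zero]
    refine integral_congr_ae (Filter.Eventually.of_forall fun y => ?_)
    simp only []
    rw [← hper (j.insertNth ((0 : Vec (n+1)) j) y) (Pi.single j 1)]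
    congr 1
    funext l
    refine Fin.succAboveCases j ?_ (fun l => ?_) l
    · simp
    · simp
  · simp [h]

lemma cf_dirx {d : ℕ} {f : Phase d → ℂ} (hf : ContDiff ℝ (⊤ : ℕ∞) f) (hper : PeriodicX f)
    (k : Fin d → ℤ) (i : Fin d) (ξ : Vec d) :
    cf (dirD (Pi.single i 1, 0) f) k ξ = Complex.I * (k i : ℂ) * cf f k ξ := by
  have hs : ContDiff ℝ (⊤ : ℕ∞) (fun x : Vec d => f (x, ξ)) :=
    hf.comp (contDiff_id.prodMk contDiff_const)
  have hg : ContDiff ℝ (⊤ : ℕ∞) (fun x : Vec d => ek k x * f (x, ξ)) := (ek_contDiff k).mul hs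
  have h0 := integral_deriv_periodic (fun x : Vec d => ek k x * f (x, ξ))
    (hg.of_le (by exact_mod_cast le_top)) (fun x n => by
      rw [ek_add_period, hper]) i
  have hd : ∀ x : Vec d, fderiv ℝ (fun x : Vec d => ek k x * f (x, ξ)) x (Pi.single i 1) =
      ek k x * dirD (Pi.single i 1, 0) f (x, ξ) - Complex.I * (k i : ℂ) * (ek k x * f (x, ξ)) := by
    intro x
    have h1 : HasFDerivAt (ek k) (fderiv ℝ (ek k) x) x :=
      (((ek_contDiff k).differentiable (by simp)).differentiableAt.hasFDerivAt)
    have h2 : HasFDerivAt f (fderiv ℝ f (x, ξ)) (x, ξ) :=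
      (hf.differentiable (by simp)).differentiableAt.hasFDerivAt
    have h3 := HasFDerivAt.comp x (g := f) (f := fun e : Vec d => ((e, ξ) : Phase d)) h2
      (hasFDerivAt_prodMk_left x ξ)
    have h4 := h1.mul h3
    have h5 : fderiv ℝ (fun x : Vec d => ek k x * f (x, ξ)) x = _ := h4.fderiv
    rw [h5]
    simp [dirD, ek_fderiv]
    ring
  simp only [hd] at h0
  have hD : Continuous (dirD (Pi.single i 1, 0) f) := by
    have := (hf.continuous_fderiv (by simp))
    unfold dirD
    fun_prop
  have hek := (ek_contDiff k).continuous
  have hfc := hf.continuous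
  rw [integral_sub, integral_const_mul, sub_eq_zero] at h0
  · rw [cf_eq, cf_eq]
    simp only []
    rw [h0]
    ring
  · exact Continuous.integrableOn_Icc (by fun_prop)
  · exact Continuous.integrableOn_Icc (by fun_prop)

lemma cf_norm_le {d : ℕ} (f : Phase d → ℂ) (k : Fin d → ℤ) (ξ : Vec d) (C : ℝ)
    (hC : ∀ p, ‖f p‖ ≤ C) : ‖cf f k ξ‖ ≤ C := by
  rw [cf_eq]
  have h1 : ‖∫ x in bx d, (fun p : Phase d => ek k p.1 * f p) (x, ξ)‖ ≤
      C * (volume : Measure (Vec d)).real (bx d) := by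
    refine norm_setIntegral_le_of_norm_le_const (bx_compact d).measure_lt_top fun x _ => ?_
    simp only [norm_mul, ek_norm, one_mul]
    exact hC _
  have h2 : (volume : Measure (Vec d)).real (bx d) = (2 * Real.pi) ^ d := by
    rw [Measure.real, Real.volume_Icc_pi_toReal]
    · simp
    · intro i; simp; positivity
  rw [h2] at h1
  rw [norm_mul]
  have h3 : ‖((2 * Real.pi : ℂ) ^ d)⁻¹‖ = ((2 * Real.pi) ^ d)⁻¹ := by
    rw [norm_inv, norm_pow]
    congr 2
    simp [abs_of_pos Real.pi_pos]
  rw [h3]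
  calc _ ≤ ((2 * Real.pi) ^ d)⁻¹ * (C * (2 * Real.pi) ^ d) := by gcongr
    _ = C := by field_simp

end Param

section MDeriv

lemma dirD_contDiff {d : ℕ} {f : Phase d → ℂ} (hf : ContDiff ℝ (⊤ : ℕ∞) f) (v : Phase d) :
    ContDiff ℝ (⊤ : ℕ∞) (dirD v f) := by
  have := hf.fderiv_right (m := (⊤ : ℕ∞)) (by simp)
  exact this.clm_apply contDiff_const

lemma dirD_periodic {d : ℕ} {f : Phase d → ℂ} (hf : PeriodicX f) (v : Phase d) :
    PeriodicX (dirD v f) := by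
  intro x ξ k
  unfold dirD
  have h : (fun p : Phase d => f (p + ((fun i => 2 * Real.pi * (k i)), 0))) = f := by
    funext p
    have := hf p.1 p.2 k
    simpa [Prod.add_def] using this
  have h2 := fderiv_comp_add_right (𝕜 := ℝ) (f := f) (x := (x, ξ))
    (((fun i => 2 * Real.pi * (k i)), 0) : Phase d)
  rw [h] at h2
  rw [h2]
  simp

lemma mDeriv_good {d : ℕ} {f : Phase d → ℂ} (hf : ContDiff ℝ (⊤ : ℕ∞) f) (hp : PeriodicX f)
    (lx lξ : List (Fin d)) :
    ContDiff ℝ (⊤ : ℕ∞) (mDeriv lx lξ f) ∧ PeriodicX (mDeriv lx lξ f) := by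
  unfold mDeriv
  generalize (lx.map (fun i => ((Pi.single i 1, 0) : Phase d))
    ++ lξ.map (fun i => ((0, Pi.single i 1) : Phase d))) = l
  induction l with
  | nil => exact ⟨hf, hp⟩
  | cons v l ih => exact ⟨dirD_contDiff ih.1 v, dirD_periodic ih.2 v⟩

lemma cf_mDeriv_nil {d : ℕ} {f : Phase d → ℂ} (hf : ContDiff ℝ (⊤ : ℕ∞) f) (hp : PeriodicX f)
    (lξ : List (Fin d)) (k : Fin d → ℤ) : cf (mDeriv [] lξ f) k = mDerivξ lξ (cf f k) := by
  induction lξ with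
  | nil => rfl
  | cons i l ih =>
    have h := cf_dirξ (mDeriv_good hf hp [] l).1 k i
    rw [ih] at h
    exact h.symm

lemma cf_mDeriv {d : ℕ} {f : Phase d → ℂ} (hf : ContDiff ℝ (⊤ : ℕ∞) f) (hp : PeriodicX f)
    (lx lξ : List (Fin d)) (k : Fin d → ℤ) (ξ : Vec d) :
    cf (mDeriv lx lξ f) k ξ =
      (lx.map (fun i => Complex.I * (k i : ℂ))).prod * mDerivξ lξ (cf f k) ξ := by
  induction lx with
  | nil => rw [cf_mDeriv_nil hf hp]; simp
  | cons i l ih =>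
    have hg := mDeriv_good hf hp l lξ
    have h := cf_dirx hg.1 hg.2 k i ξ
    rw [ih] at h
    rw [List.map_cons, List.prod_cons, mul_assoc, ← h]
    rfl

lemma mDerivξ_ofFn {d : ℕ} {g : Vec d → ℂ} (hg : ContDiff ℝ (⊤ : ℕ∞) g) (n : ℕ) :
    ∀ (r : Fin n → Fin d) (ξ : Vec d), mDerivξ (List.ofFn r) g ξ =
      iteratedFDeriv ℝ n g ξ (fun j => Pi.single (r j) 1) := by
  induction n with
  | zero => intro r ξ; simp [mDerivξ]
  | succ n ih =>
    intro r ξ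
    rw [List.ofFn_succ]
    change dirDξ (r 0) (mDerivξ (List.ofFn fun i : Fin n => r i.succ) g) ξ = _
    have h1 : mDerivξ (List.ofFn fun i : Fin n => r i.succ) g = fun ξ =>
      iteratedFDeriv ℝ n g ξ (fun j => Pi.single (r j.succ) 1) := by
      funext ξ; exact ih _ ξ
    rw [h1]
    unfold dirDξ
    have hd : DifferentiableAt ℝ (iteratedFDeriv ℝ n g) ξ :=
      (hg.differentiable_iteratedFDeriv (m := n) (by exact_mod_cast ENat.natCast_lt_top n)).differentiableAt
    rw [iteratedFDeriv_succ_apply_left]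
    rw [fderiv_continuousMultilinear_apply_const_apply hd]
    rfl

lemma norm_mDerivξ_le {d : ℕ} {g : Vec d → ℂ} (hg : ContDiff ℝ (⊤ : ℕ∞) g) (l : List (Fin d))
    (ξ : Vec d) : ‖mDerivξ l g ξ‖ ≤ ‖iteratedFDeriv ℝ l.length g ξ‖ := by
  conv_lhs => rw [← List.ofFn_get l]
  rw [mDerivξ_ofFn hg]
  refine (ContinuousMultilinearMap.le_opNorm _ _).trans ?_
  simp [Pi.norm_single]

lemma norm_iteratedFDeriv_le_sum {d : ℕ} {g : Vec d → ℂ} (hg : ContDiff ℝ (⊤ : ℕ∞) g) (n : ℕ)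
    (ξ : Vec d) : ‖iteratedFDeriv ℝ n g ξ‖ ≤
      ∑ r : Fin n → Fin d, ‖mDerivξ (List.ofFn r) g ξ‖ := by
  refine ContinuousMultilinearMap.opNorm_le_bound (Finset.sum_nonneg fun _ _ => norm_nonneg _) ?_
  intro v
  have hv : v = fun j => ∑ i : Fin d, v j i • (Pi.single i 1 : Vec d) := by
    funext j
    exact pi_eq_sum_univ' (v j)
  have h1 : iteratedFDeriv ℝ n g ξ v = ∑ r : Fin n → Fin d,
      (∏ j, v j (r j)) • iteratedFDeriv ℝ n g ξ (fun j => Pi.single (r j) 1) := by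
    conv_lhs => rw [hv]
    rw [ContinuousMultilinearMap.map_sum]
    refine Finset.sum_congr rfl fun r _ => ?_
    rw [ContinuousMultilinearMap.map_smul_univ]
  rw [h1, Finset.sum_mul]
  refine (norm_sum_le _ _).trans (Finset.sum_le_sum fun r _ => ?_)
  rw [norm_smul, mDerivξ_ofFn hg, mul_comm]
  gcongr
  rw [norm_prod]
  exact Finset.prod_le_prod (fun _ _ => norm_nonneg _) fun j _ => norm_le_pi_norm (v j) (r j)

end MDeriv

section Bounds

lemma exists_norm_le_coord {d : ℕ} {k : Fin d → ℤ} (hk : k ≠ 0) : ∃ i, ‖k‖ ≤ ‖k i‖ := by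
  obtain ⟨i0, _⟩ := Function.ne_iff.1 hk
  have : Nonempty (Fin d) := ⟨i0⟩
  obtain ⟨i, hi⟩ := Finite.exists_max (fun i => ‖k i‖)
  exact ⟨i, (pi_norm_le_iff_of_nonneg (norm_nonneg _)).2 hi⟩

lemma K_bound_list {d : ℕ} {m δ : ℝ} {K : ℝ → Phase d → ℂ} (hK : IsSymbol d δ m K)
    (hKper : ∀ h ∈ Set.Ioc (0:ℝ) 1, PeriodicX (K h)) (N : ℕ) (l : List (Fin d)) :
    ∃ C, 0 ≤ C ∧ ∀ h ∈ Set.Ioc (0:ℝ) 1, ∀ (k : Fin d → ℤ) (ξ : Vec d),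
      (max 1 ‖k‖) ^ N * ‖mDerivξ l (cf (K h) k) ξ‖ ≤ C * h ^ (m - δ * (l.length : ℝ)) := by
  obtain ⟨C0, hC0, hC0b⟩ := hK.2 [] l
  choose C hC hCb using fun i : Fin d => hK.2 (List.replicate N i) l
  have hsum : 0 ≤ ∑ i, C i := Finset.sum_nonneg fun i _ => (hC i).le
  refine ⟨C0 + ∑ i, C i, by positivity, fun h hh k ξ => ?_⟩
  have hpow : 0 ≤ h ^ (m - δ * (l.length : ℝ)) := Real.rpow_nonneg hh.1.le _
  by_cases hk : k = 0
  · have h1 := cf_norm_le (mDeriv [] l (K h)) k ξ _ (fun p => hC0b h hh p)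
    rw [cf_mDeriv_nil (hK.1 h hh) (hKper h hh)] at h1
    have : max 1 ‖k‖ = 1 := by rw [hk]; simp
    rw [this, one_pow, one_mul]
    refine h1.trans ?_
    gcongr
    linarith
  · obtain ⟨i, hi⟩ := exists_norm_le_coord hk
    have h1 := cf_norm_le (mDeriv (List.replicate N i) l (K h)) k ξ _ (fun p => hCb i h hh p)
    rw [cf_mDeriv (hK.1 h hh) (hKper h hh), norm_mul] at h1
    have h2 : ‖((List.replicate N i).map (fun i => Complex.I * (k i : ℂ))).prod‖ = ‖k i‖ ^ N := by
      rw [List.map_replicate, List.prod_replicate, norm_pow, norm_mul, Complex.norm_I, one_mul,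
        Complex.norm_intCast, Int.norm_eq_abs]
    rw [h2] at h1
    rw [max_eq_right (one_le_norm_int hk)]
    calc _ ≤ ‖k i‖ ^ N * ‖mDerivξ l (cf (K h) k) ξ‖ := by gcongr
      _ ≤ _ := h1
      _ ≤ _ := by
        gcongr
        have := Finset.single_le_sum (f := C) (fun i _ => (hC i).le) (Finset.mem_univ i)
        linarith

lemma K_bound {d : ℕ} {m δ : ℝ} {K : ℝ → Phase d → ℂ} (hK : IsSymbol d δ m K)
    (hKper : ∀ h ∈ Set.Ioc (0:ℝ) 1, PeriodicX (K h)) (N n : ℕ) :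
    ∃ C, 0 ≤ C ∧ ∀ h ∈ Set.Ioc (0:ℝ) 1, ∀ (k : Fin d → ℤ) (ξ : Vec d),
      (max 1 ‖k‖) ^ N * ‖iteratedFDeriv ℝ n (cf (K h) k) ξ‖ ≤ C * h ^ (m - δ * (n : ℝ)) := by
  choose C hC hCb using fun r : Fin n → Fin d => K_bound_list hK hKper N (List.ofFn r)
  refine ⟨∑ r, C r, Finset.sum_nonneg fun r _ => hC r, fun h hh k ξ => ?_⟩
  have h1 := norm_iteratedFDeriv_le_sum (cf_contDiff (hK.1 h hh) k) n ξ
  calc _ ≤ (max 1 ‖k‖) ^ N * ∑ r : Fin n → Fin d, ‖mDerivξ (List.ofFn r) (cf (K h) k) ξ‖ := by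
        gcongr
    _ = ∑ r : Fin n → Fin d, (max 1 ‖k‖) ^ N * ‖mDerivξ (List.ofFn r) (cf (K h) k) ξ‖ :=
        Finset.mul_sum _ _ _
    _ ≤ ∑ r : Fin n → Fin d, C r * h ^ (m - δ * (n : ℝ)) :=
        Finset.sum_le_sum fun r _ => by simpa using hCb r h hh k ξ
    _ = _ := (Finset.sum_mul _ _ _).symm

/-- the multiplier -/
def psi {d : ℕ} (H : Vec d → ℝ) (χ : ℝ → ℝ) (δ h : ℝ) (k : Fin d → ℤ) (ξ : Vec d) : ℝ :=
  if k = 0 then 1 else χ (Om H ξ (zr k) / (znorm k * h ^ δ))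

/-- the linear functional giving the argument of the cut-off -/
def argL {d : ℕ} (δ h : ℝ) (k : Fin d → ℤ) : (Vec d →L[ℝ] ℝ) →L[ℝ] ℝ :=
  (znorm k * h ^ δ)⁻¹ • ContinuousLinearMap.apply ℝ ℝ (zr k)

lemma norm_le_znorm {d : ℕ} (k : Fin d → ℤ) : ‖zr k‖ ≤ znorm k := by
  refine (pi_norm_le_iff_of_nonneg (Real.sqrt_nonneg _)).2 fun i => ?_
  unfold zr
  rw [Real.norm_eq_abs]
  refine Real.abs_le_sqrt ?_
  exact Finset.single_le_sum (f := fun i => ((k i : ℤ) : ℝ) ^ 2) (fun i _ => sq_nonneg _)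
    (Finset.mem_univ i)

lemma argL_norm {d : ℕ} (δ : ℝ) {h : ℝ} (hh : 0 < h) {k : Fin d → ℤ} (hk : k ≠ 0) :
    ‖argL δ h k‖ ≤ h ^ (-δ) := by
  have hz : 0 < znorm k := by
    have := norm_le_znorm k
    rw [norm_zr] at this
    linarith [one_le_norm_int hk]
  have hp : 0 < h ^ δ := Real.rpow_pos_of_pos hh _
  refine ContinuousLinearMap.opNorm_le_bound _ (Real.rpow_nonneg hh.le _) fun L => ?_
  have : argL δ h k L = (znorm k * h ^ δ)⁻¹ * L (zr k) := rfl
  rw [this, norm_mul, Real.norm_of_nonneg (by positivity), Real.rpow_neg hh.le]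
  have h1 : ‖L (zr k)‖ ≤ ‖L‖ * znorm k :=
    (L.le_opNorm _).trans (by gcongr; exact norm_le_znorm k)
  calc _ ≤ (znorm k * h ^ δ)⁻¹ * (‖L‖ * znorm k) := by gcongr
    _ = _ := by field_simp

lemma psi_eq {d : ℕ} (H : Vec d → ℝ) (χ : ℝ → ℝ) (δ h : ℝ) {k : Fin d → ℤ} (hk : k ≠ 0) :
    psi H χ δ h k = χ ∘ (argL δ h k ∘ fderiv ℝ H) := by
  funext ξ
  simp only [psi, if_neg hk, Function.comp]
  congr 1
  change _ = (znorm k * h ^ δ)⁻¹ * fderiv ℝ H ξ (zr k)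
  rw [Om]
  ring

lemma psi_contDiff {d : ℕ} {H : Vec d → ℝ} (hH : ContDiff ℝ (⊤ : ℕ∞) H) {χ : ℝ → ℝ}
    (hχ : CutOff χ) (δ h : ℝ) (k : Fin d → ℤ) : ContDiff ℝ (⊤ : ℕ∞) (psi H χ δ h k) := by
  by_cases hk : k = 0
  · have : psi H χ δ h k = fun _ => 1 := by funext ξ; simp [psi, hk]
    rw [this]; exact contDiff_const
  · rw [psi_eq H χ δ h hk]
    exact hχ.smooth.comp ((argL δ h k).contDiff.comp (hH.fderiv_right (m := (⊤ : ℕ∞)) (by simp)))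

lemma chi_bound {χ : ℝ → ℝ} (hχ : CutOff χ) (n : ℕ) :
    ∃ C, 0 ≤ C ∧ ∀ t, ‖iteratedFDeriv ℝ n χ t‖ ≤ C := by
  have hs : HasCompactSupport χ := by
    refine HasCompactSupport.intro (isCompact_Icc (a := (-1:ℝ)) (b := 1)) fun t ht => hχ.supp t ?_
    by_contra hlt
    exact ht (abs_le.1 (not_le.1 hlt).le)
  have hc : Continuous (iteratedFDeriv ℝ n χ) :=
    hχ.smooth.continuous_iteratedFDeriv (m := n) (by exact_mod_cast le_top)
  obtain ⟨C, hC⟩ := hc.bounded_above_of_compact_support (hs.iteratedFDeriv n)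
  exact ⟨C, (norm_nonneg _).trans (hC 0), hC⟩

lemma psi_bound {d : ℕ} {δ : ℝ} (hδ : 0 < δ) {H : Vec d → ℝ} (hH : ContDiff ℝ (⊤ : ℕ∞) H)
    (hHb : BddDerivs H) {χ : ℝ → ℝ} (hχ : CutOff χ) (n : ℕ) :
    ∃ C, 0 ≤ C ∧ ∀ h ∈ Set.Ioc (0:ℝ) 1, ∀ (k : Fin d → ℤ) (ξ : Vec d),
      ‖iteratedFDeriv ℝ n (psi H χ δ h k) ξ‖ ≤ C * h ^ (-(δ * (n : ℝ))) := by
  choose Cχ hCχ hCχb using fun i => chi_bound hχ i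
  choose CH hCHb using hHb
  have hCH : ∀ i, 0 ≤ CH i := fun i => (norm_nonneg _).trans (hCHb i 0)
  let M := ∑ i ∈ Finset.range (n + 1), Cχ i
  let D := 1 + ∑ i ∈ Finset.range (n + 1), CH (i + 1)
  have hM : 0 ≤ M := Finset.sum_nonneg fun i _ => hCχ i
  have hD : 1 ≤ D := by
    have : 0 ≤ ∑ i ∈ Finset.range (n + 1), CH (i + 1) := Finset.sum_nonneg fun i _ => hCH _
    simp only [D]; linarith
  refine ⟨1 + n.factorial * M * D ^ n, by positivity, fun h hh k ξ => ?_⟩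
  have hpow1 : 1 ≤ h ^ (-(δ * (n : ℝ))) :=
    Real.one_le_rpow_of_pos_of_le_one_of_nonpos hh.1 hh.2 (by
      have : 0 ≤ δ * (n:ℝ) := by positivity
      linarith)
  by_cases hk : k = 0
  · have e : psi H χ δ h k = fun _ => 1 := by funext ξ; simp [psi, hk]
    rw [e]
    have h1 : ‖iteratedFDeriv ℝ n (fun _ : Vec d => (1:ℝ)) ξ‖ ≤ 1 := by
      cases n with
      | zero => simp
      | succ n => rw [iteratedFDeriv_const_of_ne (by simp)]; simp
    have h2 : (0:ℝ) ≤ n.factorial * M * D ^ n := by positivity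
    calc _ ≤ (1:ℝ) := h1
      _ ≤ (1 + n.factorial * M * D ^ n) * 1 := by linarith
      _ ≤ _ := by gcongr
  · rw [psi_eq H χ δ h hk]
    have hdH : ContDiff ℝ (⊤ : ℕ∞) (fderiv ℝ H) := hH.fderiv_right (m := (⊤ : ℕ∞)) (by simp)
    have hs1 : 1 ≤ h ^ (-δ) :=
      Real.one_le_rpow_of_pos_of_le_one_of_nonpos hh.1 hh.2 (by linarith)
    have h1 := norm_iteratedFDeriv_comp_le (n := n) (C := M) (D := D * h ^ (-δ)) hχ.smooth
      ((argL δ h k).contDiff.comp hdH) (by exact_mod_cast le_top) ξ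
      (fun i hi => (hCχb i _).trans
        (Finset.single_le_sum (f := Cχ) (fun i _ => hCχ i) (Finset.mem_range.2 (by omega))))
      (fun i hi1 hi => by
        have h2 := (argL δ h k).norm_iteratedFDeriv_comp_left (n := i) (hdH.contDiffAt (x := ξ))
          (by exact_mod_cast le_top)
        rw [norm_iteratedFDeriv_fderiv] at h2
        have h3 : CH (i + 1) ≤ D := by
          have := Finset.single_le_sum (f := fun i => CH (i + 1)) (fun i _ => hCH _)
            (Finset.mem_range.2 (by omega : i < n + 1))
          simp only [D]
          linarith
        calc _ ≤ _ := h2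
          _ ≤ h ^ (-δ) * CH (i + 1) := by
              gcongr
              · exact argL_norm δ hh.1 hk
              · exact hCHb _ _
          _ ≤ h ^ (-δ) * D := by gcongr
          _ = D * h ^ (-δ) := mul_comm _ _
          _ ≤ (D * h ^ (-δ)) ^ i :=
              le_self_pow₀ (one_le_mul_of_one_le_of_one_le hD hs1) (by omega))
    have e : (h ^ (-δ)) ^ n = h ^ (-(δ * (n : ℝ))) := by
      rw [← Real.rpow_natCast, ← Real.rpow_mul hh.1.le]
      congr 1
      ring
    rw [mul_pow, e] at h1
    calc _ ≤ _ := h1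
      _ = (n.factorial * M * D ^ n) * h ^ (-(δ * (n : ℝ))) := by ring
      _ ≤ _ := by gcongr; linarith

lemma A_bound {d : ℕ} {m δ : ℝ} (hδ : 0 < δ) {H : Vec d → ℝ} (hH : ContDiff ℝ (⊤ : ℕ∞) H)
    (hHb : BddDerivs H) {χ : ℝ → ℝ} (hχ : CutOff χ) {K : ℝ → Phase d → ℂ}
    (hK : IsSymbol d δ m K) (hKper : ∀ h ∈ Set.Ioc (0:ℝ) 1, PeriodicX (K h))
    {A : ℝ → Phase d → ℂ} (hA : IsHAverage H χ δ K A) (N n : ℕ) :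
    ∃ C, 0 ≤ C ∧ ∀ h ∈ Set.Ioc (0:ℝ) 1, ∀ (k : Fin d → ℤ) (ξ : Vec d),
      (max 1 ‖k‖) ^ N * ‖iteratedFDeriv ℝ n (cf (A h) k) ξ‖ ≤ C * h ^ (m - δ * (n : ℝ)) := by
  choose C hC hCb using fun n => K_bound hK hKper N n
  choose P hP hPb using fun n => psi_bound hδ hH hHb hχ n
  refine ⟨∑ i ∈ Finset.range (n + 1), (n.choose i : ℝ) * P i * C (n - i),
    Finset.sum_nonneg fun i _ => mul_nonneg (mul_nonneg (by positivity) (hP _)) (hC _),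
    fun h hh k ξ => ?_⟩
  have e : cf (A h) k = fun ξ => psi H χ δ h k ξ • cf (K h) k ξ := by
    funext ξ
    have := hA.2.2 h hh k ξ
    unfold cf
    rw [this]
    by_cases hk : k = 0
    · simp [psi, hk]
    · simp [psi, hk]
  rw [e]
  have h1 := norm_iteratedFDeriv_smul_le (n := n) (psi_contDiff hH hχ δ h k)
    (cf_contDiff (hK.1 h hh) k) ξ (by exact_mod_cast le_top)
  calc _ ≤ (max 1 ‖k‖) ^ N * ∑ i ∈ Finset.range (n + 1), (n.choose i : ℝ) *
        ‖iteratedFDeriv ℝ i (psi H χ δ h k) ξ‖ * ‖iteratedFDeriv ℝ (n - i) (cf (K h) k) ξ‖ := by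
        gcongr
    _ = ∑ i ∈ Finset.range (n + 1), (n.choose i : ℝ) *
        ‖iteratedFDeriv ℝ i (psi H χ δ h k) ξ‖ *
        ((max 1 ‖k‖) ^ N * ‖iteratedFDeriv ℝ (n - i) (cf (K h) k) ξ‖) := by
        rw [Finset.mul_sum]
        exact Finset.sum_congr rfl fun i _ => by ring
    _ ≤ ∑ i ∈ Finset.range (n + 1), (n.choose i : ℝ) *
        (P i * h ^ (-(δ * (i : ℝ)))) * (C (n - i) * h ^ (m - δ * ((n - i : ℕ) : ℝ))) := by
        refine Finset.sum_le_sum fun i _ => ?_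
        have hpp : 0 ≤ P i * h ^ (-(δ * (i : ℝ))) :=
          mul_nonneg (hP i) (Real.rpow_nonneg hh.1.le _)
        refine mul_le_mul ?_ (hCb (n - i) h hh k ξ) (by positivity) (by positivity)
        exact mul_le_mul_of_nonneg_left (hPb i h hh k ξ) (by positivity)
    _ = _ := by
        rw [Finset.sum_mul]
        refine Finset.sum_congr rfl fun i hi => ?_
        have hi' : i ≤ n := by have := Finset.mem_range.1 hi; omega
        have hx : h ^ (m - δ * (n : ℝ)) =
            h ^ (-(δ * (i : ℝ))) * h ^ (m - δ * ((n - i : ℕ) : ℝ)) := by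
          rw [← Real.rpow_add hh.1]
          congr 1
          push_cast [Nat.cast_sub hi']
          ring
        rw [hx]
        ring

lemma norm_char_prod_le {d : ℕ} (lx : List (Fin d)) (k : Fin d → ℤ) :
    ‖(lx.map (fun i => Complex.I * (k i : ℂ))).prod‖ ≤ (max 1 ‖k‖) ^ lx.length := by
  induction lx with
  | nil => simp
  | cons i l ih =>
    rw [List.map_cons, List.prod_cons, norm_mul, List.length_cons, pow_succ']
    gcongr
    rw [norm_mul, Complex.norm_I, one_mul, Complex.norm_intCast, ← Int.norm_eq_abs]
    exact (norm_le_pi_norm k i).trans (le_max_right _ _)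

end Bounds

/-- the `ℏ^δ`-average of a symbol `K_ℏ ∈ Ψ_δ^m` is again in `Ψ_δ^m`. -/
theorem stmt8 (d : ℕ) (m δ : ℝ) (hδ : 0 < δ)
    (H : Vec d → ℝ) (hH : ContDiff ℝ (⊤ : ℕ∞) H) (hHb : BddDerivs H)
    (χ : ℝ → ℝ) (hχ : CutOff χ)
    (K : ℝ → Phase d → ℂ) (hK : IsSymbol d δ m K)
    (hKper : ∀ h ∈ Set.Ioc (0:ℝ) 1, PeriodicX (K h))
    (A : ℝ → Phase d → ℂ) (hA : IsHAverage H χ δ K A) :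
    IsSymbol d δ m A := by
  refine ⟨hA.1, fun lx lξ => ?_⟩
  obtain ⟨C, hC, hCb⟩ := A_bound hδ hH hHb hχ hK hKper hA (lx.length + (d + 1)) lξ.length
  have hS := summable_weight d
  have hS0 : 0 ≤ ∑' k : Fin d → ℤ, ((max 1 ‖k‖) ^ (d + 1))⁻¹ :=
    tsum_nonneg fun k => by positivity
  refine ⟨C * (∑' k : Fin d → ℤ, ((max 1 ‖k‖) ^ (d + 1))⁻¹) + 1, by positivity,
    fun h hh p => ?_⟩
  have hpow : 0 ≤ h ^ (m - δ * (lξ.length : ℝ)) := Real.rpow_nonneg hh.1.le _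
  have hgood := mDeriv_good (hA.1 h hh) (hA.2.1 h hh) lx lξ
  have hcont := hgood.1.continuous
  have key := norm_le_of_coeff (fun x => mDeriv lx lξ (A h) (x, p.2)) (by fun_prop)
    (fun x k => hgood.2 x p.2 k)
    (fun k => (C * h ^ (m - δ * (lξ.length : ℝ))) * ((max 1 ‖k‖) ^ (d + 1))⁻¹)
    (hS.mul_left _) (fun k => by
      change ‖cf (mDeriv lx lξ (A h)) k p.2‖ ≤ _
      rw [cf_mDeriv (hA.1 h hh) (hA.2.1 h hh), norm_mul]
      have hw : 0 < max 1 ‖k‖ := lt_of_lt_of_le one_pos (le_max_left _ _)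
      rw [← div_eq_mul_inv, le_div_iff₀ (by positivity)]
      calc _ ≤ (max 1 ‖k‖) ^ lx.length * ‖iteratedFDeriv ℝ lξ.length (cf (A h) k) p.2‖ *
            (max 1 ‖k‖) ^ (d + 1) := by
            gcongr
            · exact norm_char_prod_le lx k
            · exact norm_mDerivξ_le (cf_contDiff (hA.1 h hh) k) lξ p.2
        _ = (max 1 ‖k‖) ^ (lx.length + (d + 1)) *
            ‖iteratedFDeriv ℝ lξ.length (cf (A h) k) p.2‖ := by ring
        _ ≤ _ := hCb h hh k p.2) p.1
  rw [tsum_mul_left] at key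
  refine key.trans ?_
  nlinarith
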